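/- arXiv:2012.12034 — 2 statements merged into one kernel-verified Lean document; each statement's English description precedes it below -/
import Mathlib

section
/- Let T and S be bounded linear operators on H each admitting an A-adjoint. Then ω_A(T+S) ≤ sqrt( (1/2) · ( ‖T T^{♯_A} + S S^{♯_A}‖_A + ‖T T^{♯_A} − S S^{♯_A}‖_A ) + ω_A(S T^{♯_A}) + 2 ω_A(T) ω_A(S) ). -/
noncomputable section

open ContinuousLinearMap

variable {H : Type*} [NormedAddCommGroup H] [InnerProductSpace ℂ H] [CompleteSpace H]

/-- The semi-inner product induced by the positive operator `A`: `⟨x, y⟩_A := ⟨A x, y⟩`. -/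
def innA (A : H →L[ℂ] H) (x y : H) : ℂ := inner ℂ (A x) y

/-- The seminorm induced by `A`: `‖x‖_A := ⟨x, x⟩_A ^ (1/2)`. -/
def vnormA (A : H →L[ℂ] H) (x : H) : ℝ := Real.sqrt (innA A x x).re

/-- The `A`-operator seminorm: `‖T‖_A := sup {‖T x‖_A : ‖x‖_A = 1}`. -/
def opNormA (A T : H →L[ℂ] H) : ℝ :=
  sSup {c : ℝ | ∃ x : H, vnormA A x = 1 ∧ c = vnormA A (T x)}

/-- The `A`-numerical radius: `ω_A(T) := sup {|⟨T x, x⟩_A| : ‖x‖_A = 1}`. -/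
def wA (A T : H →L[ℂ] H) : ℝ :=
  sSup {c : ℝ | ∃ x : H, vnormA A x = 1 ∧ c = ‖innA A (T x) x‖}

/-- `T` admits an `A`-adjoint: there is a bounded operator `X` with `A X = T* A`. -/
def HasAAdjoint (A T : H →L[ℂ] H) : Prop :=
  ∃ X : H →L[ℂ] H, A ∘L X = adjoint T ∘L A

/-- `X` is the reduced `A`-adjoint `T^{♯_A}` of `T`: it solves `A X = T* A` and its range
is contained in the closure of the range of `A`. -/
def IsReducedAAdjoint (A T X : H →L[ℂ] H) : Prop :=
  (A ∘L X = adjoint T ∘L A) ∧ ∀ y : H, X y ∈ closure (Set.range A)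

/-- The Bombieri-type bound for two vectors tested against a unit vector. -/
theorem norm_inner_sq_add_norm_inner_sq_le {E : Type*} [NormedAddCommGroup E]
    [InnerProductSpace ℂ E] (e u v : E) (he : ‖e‖ = 1) :
    ‖(inner ℂ u e : ℂ)‖ ^ 2 + ‖(inner ℂ v e : ℂ)‖ ^ 2 ≤
      max (‖u‖ ^ 2) (‖v‖ ^ 2) + ‖(inner ℂ u v : ℂ)‖ := by
  set a : ℂ := inner ℂ u e with ha
  set b : ℂ := inner ℂ v e with hb
  set m := max (‖u‖ ^ 2) (‖v‖ ^ 2) with hm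
  set g := ‖(inner ℂ u v : ℂ)‖ with hg
  have hinner : inner ℂ (a • u + b • v) e = ((‖a‖ ^ 2 + ‖b‖ ^ 2 : ℝ) : ℂ) := by
    rw [inner_add_left, inner_smul_left, inner_smul_left, ← ha, ← hb,
      Complex.conj_mul', Complex.conj_mul']
    push_cast
    rfl
  have hle : ‖a‖ ^ 2 + ‖b‖ ^ 2 ≤ ‖a • u + b • v‖ := by
    have h := norm_inner_le_norm (𝕜 := ℂ) (a • u + b • v) e
    rwa [hinner, he, mul_one, Complex.norm_real, Real.norm_of_nonneg (by positivity)] at h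
  have hexpand : ‖a • u + b • v‖ ^ 2 ≤
      ‖a‖ ^ 2 * ‖u‖ ^ 2 + 2 * (‖a‖ * ‖b‖ * g) + ‖b‖ ^ 2 * ‖v‖ ^ 2 := by
    rw [norm_add_sq (𝕜 := ℂ), norm_smul, norm_smul, mul_pow, mul_pow]
    have h : RCLike.re (inner ℂ (a • u) (b • v) : ℂ) ≤ ‖a‖ * ‖b‖ * g := by
      refine (RCLike.re_le_norm _).trans_eq ?_
      rw [inner_smul_left, inner_smul_right, norm_mul, norm_mul, RCLike.norm_conj, mul_assoc]
    linarith
  have hu : ‖u‖ ^ 2 ≤ m := le_max_left _ _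
  have hv : ‖v‖ ^ 2 ≤ m := le_max_right _ _
  have hg0 : 0 ≤ g := norm_nonneg _
  have hm0 : 0 ≤ m := (sq_nonneg _).trans hu
  have hsq : (‖a‖ ^ 2 + ‖b‖ ^ 2) * (‖a‖ ^ 2 + ‖b‖ ^ 2) ≤
      (‖a‖ ^ 2 + ‖b‖ ^ 2) * (m + g) := by
    have h1 : (‖a‖ ^ 2 + ‖b‖ ^ 2) ^ 2 ≤ ‖a • u + b • v‖ ^ 2 :=
      pow_le_pow_left₀ (by positivity) hle 2
    nlinarith [mul_le_mul_of_nonneg_left hu (sq_nonneg ‖a‖),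
      mul_le_mul_of_nonneg_left hv (sq_nonneg ‖b‖),
      mul_nonneg (sq_nonneg (‖a‖ - ‖b‖)) hg0]
  rcases (by positivity : 0 ≤ ‖a‖ ^ 2 + ‖b‖ ^ 2).eq_or_lt with h0 | h0
  · rw [← h0]
    positivity
  · exact le_of_mul_le_mul_left hsq h0

/-- The semi-inner product of a positive operator is the inner product after applying an
operator square root. -/
theorem exists_innA_eq_inner (A : H →L[ℂ] H) (hA : A.IsPositive) :
    ∃ B : H →L[ℂ] H, ∀ x y, innA A x y = inner ℂ (B x) (B y) := by
  have hA0 : 0 ≤ A := (nonneg_iff_isPositive A).2 hA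
  have hB : (CFC.sqrt A).IsPositive := (nonneg_iff_isPositive _).1 (CFC.sqrt_nonneg A)
  refine ⟨CFC.sqrt A, fun x y => ?_⟩
  have h : inner ℂ (CFC.sqrt A (CFC.sqrt A x)) y = inner ℂ (CFC.sqrt A x) (CFC.sqrt A y) :=
    hB.isSymmetric _ _
  rw [← h, ← mul_apply_eq_comp, CFC.sqrt_mul_sqrt_self A hA0]
  rfl

theorem vnormA_eq_norm {A B : H →L[ℂ] H} (hB : ∀ x y, innA A x y = inner ℂ (B x) (B y))
    (x : H) : vnormA A x = ‖B x‖ := by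
  rw [vnormA, hB, inner_self_eq_norm_sq_to_K]
  norm_cast
  exact Real.sqrt_sq (norm_nonneg _)

theorem innA_apply_left {A T X : H →L[ℂ] H} (hA : A.IsPositive)
    (hX : A ∘L X = adjoint T ∘L A) (x y : H) : innA A (T x) y = innA A x (X y) := by
  have hs : ∀ u v : H, inner ℂ (A u) v = inner ℂ u (A v) := hA.isSymmetric
  have h : A (X y) = adjoint T (A y) := congrArg (fun F : H →L[ℂ] H => F y) hX
  rw [innA, innA, hs, hs, h, adjoint_inner_right]

theorem innA_apply_right {A T X : H →L[ℂ] H}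
    (hX : A ∘L X = adjoint T ∘L A) (x y : H) : innA A (X x) y = innA A x (T y) := by
  have h : A (X x) = adjoint T (A x) := congrArg (fun F : H →L[ℂ] H => F x) hX
  rw [innA, innA, h, adjoint_inner_left]

/-- An operator that is symmetric for the semi-inner product is bounded for the seminorm. -/
theorem norm_apply_le_of_symm {B P : H →L[ℂ] H}
    (hP : ∀ x y, (inner ℂ (B (P x)) (B y) : ℂ) = inner ℂ (B x) (B (P y)))
    {x : H} (hx : ‖B x‖ = 1) : ‖B (P x)‖ ≤ ‖P‖ + 1 := by
  have hpow : ∀ (n : ℕ) (y z : H),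
      (inner ℂ (B ((P ^ n) y)) (B z) : ℂ) = inner ℂ (B y) (B ((P ^ n) z)) := by
    intro n
    induction n with
    | zero => intro y z; rfl
    | succ n ih =>
      intro y z
      rw [pow_succ, mul_apply_eq_comp, ih, hP, ← pow_succ, pow_succ', mul_apply_eq_comp]
  have hdouble : ∀ n : ℕ, ‖B ((P ^ n) x)‖ ^ 2 ≤ ‖B ((P ^ (n + n)) x)‖ := by
    intro n
    have h : ‖(inner ℂ (B ((P ^ n) x)) (B ((P ^ n) x)) : ℂ)‖ = ‖B ((P ^ n) x)‖ ^ 2 := by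
      rw [inner_self_eq_norm_sq_to_K]
      simp
    rw [← h, hpow, ← mul_apply_eq_comp (P ^ n), ← pow_add]
    simpa [hx] using norm_inner_le_norm (𝕜 := ℂ) (B x) (B ((P ^ (n + n)) x))
  have hiter : ∀ n : ℕ, ‖B (P x)‖ ^ 2 ^ n ≤ ‖B ((P ^ 2 ^ n) x)‖ := by
    intro n
    induction n with
    | zero => simp
    | succ n ih =>
      calc ‖B (P x)‖ ^ 2 ^ (n + 1) = (‖B (P x)‖ ^ 2 ^ n) ^ 2 := by rw [pow_succ, pow_mul]
        _ ≤ ‖B ((P ^ 2 ^ n) x)‖ ^ 2 := by gcongr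
        _ ≤ ‖B ((P ^ 2 ^ (n + 1)) x)‖ := by
          rw [pow_succ 2 n, mul_two]
          exact hdouble _
  have hbound : ∀ n : ℕ, ‖B (P x)‖ ^ 2 ^ n ≤ ‖B‖ * ‖x‖ * (‖P‖ + 1) ^ 2 ^ n := by
    intro n
    calc ‖B (P x)‖ ^ 2 ^ n ≤ ‖B ((P ^ 2 ^ n) x)‖ := hiter n
      _ ≤ ‖B‖ * (‖P ^ 2 ^ n‖ * ‖x‖) :=
        (B.le_opNorm _).trans (by gcongr; exact le_opNorm _ _)
      _ ≤ ‖B‖ * ((‖P‖ + 1) ^ 2 ^ n * ‖x‖) := by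
        gcongr
        exact (norm_pow_le' P (by positivity)).trans (by gcongr; linarith)
      _ = ‖B‖ * ‖x‖ * (‖P‖ + 1) ^ 2 ^ n := by ring
  by_contra! hlt
  have hpos : 0 < ‖P‖ + 1 := by positivity
  have hr : 1 < ‖B (P x)‖ / (‖P‖ + 1) := (one_lt_div hpos).2 hlt
  obtain ⟨n, hn⟩ := pow_unbounded_of_one_lt (‖B‖ * ‖x‖) hr
  have h1 := pow_le_pow_right₀ hr.le (Nat.lt_two_pow_self (n := n)).le
  have h2 : (‖B (P x)‖ / (‖P‖ + 1)) ^ 2 ^ n ≤ ‖B‖ * ‖x‖ := by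
    rw [div_pow, div_le_iff₀ (by positivity)]
    exact hbound n
  linarith

theorem exists_norm_apply_le_of_adjoint {B T X : H →L[ℂ] H}
    (hl : ∀ x y, (inner ℂ (B (T x)) (B y) : ℂ) = inner ℂ (B x) (B (X y)))
    (hr : ∀ x y, (inner ℂ (B (X x)) (B y) : ℂ) = inner ℂ (B x) (B (T y))) :
    ∃ C : ℝ, ∀ x, ‖B x‖ = 1 → ‖B (T x)‖ ≤ C := by
  refine ⟨Real.sqrt (‖X * T‖ + 1), fun x hx => Real.le_sqrt_of_sq_le ?_⟩
  have hP : ‖B ((X * T) x)‖ ≤ ‖X * T‖ + 1 :=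
    norm_apply_le_of_symm (fun y z => by rw [mul_apply_eq_comp, mul_apply_eq_comp, hr, hl]) hx
  have h : ‖(inner ℂ (B (T x)) (B (T x)) : ℂ)‖ = ‖B (T x)‖ ^ 2 := by
    rw [inner_self_eq_norm_sq_to_K]
    simp
  rw [← h, hl]
  refine (norm_inner_le_norm _ _).trans ?_
  rw [hx, one_mul]
  exact hP

theorem vnormA_apply_le_opNormA {A B T X : H →L[ℂ] H}
    (hB : ∀ x y, innA A x y = inner ℂ (B x) (B y))
    (hl : ∀ x y, innA A (T x) y = innA A x (X y))
    (hr : ∀ x y, innA A (X x) y = innA A x (T y)) {x : H} (hx : ‖B x‖ = 1) :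
    ‖B (T x)‖ ≤ opNormA A T := by
  simp only [hB] at hl hr
  obtain ⟨C, hC⟩ := exists_norm_apply_le_of_adjoint hl hr
  refine le_csSup ⟨C, ?_⟩ ⟨x, by rw [vnormA_eq_norm hB, hx], (vnormA_eq_norm hB _).symm⟩
  rintro c ⟨y, hy, rfl⟩
  rw [vnormA_eq_norm hB] at hy ⊢
  exact hC y hy

theorem norm_innA_apply_self_le_opNormA {A B T X : H →L[ℂ] H}
    (hB : ∀ x y, innA A x y = inner ℂ (B x) (B y))
    (hl : ∀ x y, innA A (T x) y = innA A x (X y))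
    (hr : ∀ x y, innA A (X x) y = innA A x (T y)) {x : H} (hx : ‖B x‖ = 1) :
    ‖innA A (T x) x‖ ≤ opNormA A T := by
  rw [hB]
  refine (norm_inner_le_norm _ _).trans ?_
  rw [hx, mul_one]
  exact vnormA_apply_le_opNormA hB hl hr hx

theorem norm_innA_apply_self_le_wA {A B T X : H →L[ℂ] H}
    (hB : ∀ x y, innA A x y = inner ℂ (B x) (B y))
    (hl : ∀ x y, innA A (T x) y = innA A x (X y))
    (hr : ∀ x y, innA A (X x) y = innA A x (T y)) {x : H} (hx : ‖B x‖ = 1) :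
    ‖innA A (T x) x‖ ≤ wA A T := by
  refine le_csSup ⟨opNormA A T, ?_⟩ ⟨x, by rw [vnormA_eq_norm hB, hx], rfl⟩
  rintro c ⟨y, hy, rfl⟩
  rw [vnormA_eq_norm hB] at hy
  exact norm_innA_apply_self_le_opNormA hB hl hr hy

theorem stmt7 (A : H →L[ℂ] H) (hA : A.IsPositive) (hA0 : A ≠ 0)
    (T S Tsharp Ssharp : H →L[ℂ] H)
    (hT : IsReducedAAdjoint A T Tsharp) (hS : IsReducedAAdjoint A S Ssharp) :
    wA A (T + S) ≤
      Real.sqrt ((1 / 2) * (opNormA A (T * Tsharp + S * Ssharp) +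
          opNormA A (T * Tsharp - S * Ssharp)) +
        wA A (S * Tsharp) + 2 * wA A T * wA A S) := by
  obtain ⟨B, hB⟩ := exists_innA_eq_inner A hA
  have hTl := innA_apply_left hA hT.1
  have hTr := innA_apply_right hT.1
  have hSl := innA_apply_left hA hS.1
  have hSr := innA_apply_right hS.1
  refine Real.sSup_le ?_ (Real.sqrt_nonneg _)
  rintro c ⟨x, hx, rfl⟩
  rw [vnormA_eq_norm hB] at hx
  refine Real.le_sqrt_of_sq_le ?_
  have hTx := norm_innA_apply_self_le_wA hB hTl hTr hx
  have hSx := norm_innA_apply_self_le_wA hB hSl hSr hx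
  have hadd_symm : ∀ y z, innA A ((T * Tsharp + S * Ssharp) y) z =
      innA A y ((T * Tsharp + S * Ssharp) z) := by
    intro y z
    simp only [hB] at hTl hTr hSl hSr
    simp only [hB, add_apply, mul_apply_eq_comp, map_add, inner_add_left, inner_add_right, hTl, hTr,
      hSl, hSr]
  have hsub_symm : ∀ y z, innA A ((T * Tsharp - S * Ssharp) y) z =
      innA A y ((T * Tsharp - S * Ssharp) z) := by
    intro y z
    simp only [hB] at hTl hTr hSl hSr
    simp only [hB, sub_apply, mul_apply_eq_comp, map_sub, inner_sub_left, inner_sub_right, hTl, hTr,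
      hSl, hSr]
  have hadd := norm_innA_apply_self_le_opNormA hB hadd_symm hadd_symm hx
  have hsub := norm_innA_apply_self_le_opNormA hB hsub_symm hsub_symm hx
  have hmul := norm_innA_apply_self_le_wA (T := S * Tsharp) (X := T * Ssharp) hB
    (fun y z => by rw [mul_apply_eq_comp, mul_apply_eq_comp, hSl, hTr])
    (fun y z => by rw [mul_apply_eq_comp, mul_apply_eq_comp, hTl, hSr]) hx
  have hTT : (inner ℂ (B (T (Tsharp x))) (B x) : ℂ) = ((‖B (Tsharp x)‖ ^ 2 : ℝ) : ℂ) := by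
    rw [← hB, hTl, hB, inner_self_eq_norm_sq_to_K]
    norm_cast
  have hSS : (inner ℂ (B (S (Ssharp x))) (B x) : ℂ) = ((‖B (Ssharp x)‖ ^ 2 : ℝ) : ℂ) := by
    rw [← hB, hSl, hB, inner_self_eq_norm_sq_to_K]
    norm_cast
  rw [hB, add_apply, mul_apply_eq_comp, mul_apply_eq_comp, map_add, inner_add_left, hTT, hSS,
    ← Complex.ofReal_add, Complex.norm_real, Real.norm_eq_abs] at hadd
  rw [hB, sub_apply, mul_apply_eq_comp, mul_apply_eq_comp, map_sub, inner_sub_left, hTT, hSS,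
    ← Complex.ofReal_sub, Complex.norm_real, Real.norm_eq_abs] at hsub
  have hbomb := norm_inner_sq_add_norm_inner_sq_le (B x) (B (Tsharp x)) (B (Ssharp x)) hx
  have hT_eq : ‖(inner ℂ (B (Tsharp x)) (B x) : ℂ)‖ = ‖innA A (T x) x‖ := by
    rw [norm_inner_symm, ← hB, hTl]
  have hS_eq : ‖(inner ℂ (B (Ssharp x)) (B x) : ℂ)‖ = ‖innA A (S x) x‖ := by
    rw [norm_inner_symm, ← hB, hSl]
  have hST_eq : ‖(inner ℂ (B (Tsharp x)) (B (Ssharp x)) : ℂ)‖ =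
      ‖innA A ((S * Tsharp) x) x‖ := by
    rw [mul_apply_eq_comp, hSl, hB]
  rw [hT_eq, hS_eq, hST_eq] at hbomb
  have htri : ‖innA A ((T + S) x) x‖ ≤ ‖innA A (T x) x‖ + ‖innA A (S x) x‖ := by
    simp only [hB, add_apply, map_add, inner_add_left]
    exact norm_add_le _ _
  have hprod := mul_le_mul hTx hSx (norm_nonneg _) ((norm_nonneg _).trans hTx)
  have hsq := pow_le_pow_left₀ (norm_nonneg _) htri 2
  have hmax : max (‖B (Tsharp x)‖ ^ 2) (‖B (Ssharp x)‖ ^ 2) ≤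
      (1 / 2) * (opNormA A (T * Tsharp + S * Ssharp) +
        opNormA A (T * Tsharp - S * Ssharp)) := by
    have h := (le_abs_self _).trans hadd
    have hd := abs_le.1 hsub
    exact max_le (by linarith) (by linarith)
  linarith
end
end

section
/- Let S_1, …, S_k be bounded linear operators on H each admitting an A-adjoint, and let n ≥ 1 be an integer. Then ω_A( Σ_{i=1}^k S_i )^{2n} ≤ (k^{2n−1}/√2) · Σ_{i=1}^k ω_A( (S_i^{♯_A} S_i)^{n} + i (S_i S_i^{♯_A})^{n} ). -/
noncomputable section

open ContinuousLinearMap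

variable {H : Type*} [NormedAddCommGroup H] [InnerProductSpace ℂ H] [CompleteSpace H]

omit [CompleteSpace H] in
/-- Cauchy–Schwarz inequality for the semi-inner product induced by a positive operator. -/
theorem ContinuousLinearMap.IsPositive.norm_inner_sq_le {B : H →L[ℂ] H} (hB : B.IsPositive)
    (x y : H) :
    ‖(inner ℂ (B x) y : ℂ)‖ ^ 2 ≤ (inner ℂ (B x) x : ℂ).re * (inner ℂ (B y) y : ℂ).re := by
  let core : PreInnerProductSpace.Core ℂ H :=
    { inner := fun u v => inner ℂ (B u) v
      conj_inner_symm := fun u v => by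
        rw [inner_conj_symm, hB.inner_left_eq_inner_right]
      re_inner_nonneg := fun u => hB.re_inner_nonneg_left u
      add_left := fun u v w => by simp
      smul_left := fun u v r => by simp [mul_comm] }
  have h : ‖(inner ℂ (B x) y : ℂ)‖ * ‖(inner ℂ (B y) x : ℂ)‖ ≤
      (inner ℂ (B x) x : ℂ).re * (inner ℂ (B y) y : ℂ).re :=
    @InnerProductSpace.Core.inner_mul_inner_self_le ℂ H _ _ _ core x y
  rwa [hB.inner_left_eq_inner_right y x, norm_inner_symm y (B x), ← sq] at h

omit [CompleteSpace H] in
theorem ContinuousLinearMap.IsPositive.inner_eq_re {B : H →L[ℂ] H} (hB : B.IsPositive) (x : H) :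
    (inner ℂ (B x) x : ℂ) = ((inner ℂ (B x) x : ℂ).re : ℂ) :=
  (((isPositive_iff_complex B).mp hB x).1).symm

theorem adjoint_mul_eq_of_mul_isPositive {A P : H →L[ℂ] H} (hA : A.IsPositive)
    (hP : (A * P).IsPositive) : adjoint P * A = A * P := by
  have h := hP.isSelfAdjoint.star_eq
  rw [star_mul, hA.isSelfAdjoint.star_eq] at h
  exact h

theorem mul_pow_add_two_eq {A P : H →L[ℂ] H} (hA : A.IsPositive)
    (hP : (A * P).IsPositive) (j : ℕ) :
    A * P ^ (j + 2) = adjoint P * (A * P ^ j * P) := by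
  rw [← mul_assoc, ← mul_assoc, adjoint_mul_eq_of_mul_isPositive hA hP, mul_assoc A P,
    ← pow_succ', mul_assoc, ← pow_succ]

theorem mul_pow_isPositive {A P : H →L[ℂ] H} (hA : A.IsPositive)
    (hP : (A * P).IsPositive) (j : ℕ) : (A * P ^ j).IsPositive := by
  induction j using Nat.twoStepInduction with
  | zero => simpa using hA
  | one => simpa using hP
  | more j ih _ =>
    rw [mul_pow_add_two_eq hA hP]
    exact ih.adjoint_conj P

/-- The moments `⟨P ^ j x, x⟩_A` of an `A`-positive operator `P` are log-convex. -/
theorem moment_sq_le {A P : H →L[ℂ] H} (hA : A.IsPositive) (hP : (A * P).IsPositive)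
    (x : H) (j : ℕ) :
    (innA A ((P ^ (j + 1)) x) x).re ^ 2 ≤
      (innA A ((P ^ j) x) x).re * (innA A ((P ^ (j + 2)) x) x).re := by
  have h := (mul_pow_isPositive hA hP j).norm_inner_sq_le (P x) x
  have h2 : innA A ((P ^ (j + 2)) x) x = inner ℂ ((A * P ^ j) (P x)) (P x) := by
    change inner ℂ ((A * P ^ (j + 2)) x) x = _
    rw [mul_pow_add_two_eq hA hP]
    exact adjoint_inner_left P x _
  have h1 : innA A ((P ^ (j + 1)) x) x = inner ℂ ((A * P ^ j) (P x)) x := by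
    rw [pow_succ]; rfl
  rw [h1, h2, mul_comm]
  refine le_trans ?_ h
  rw [← sq_abs]
  exact pow_le_pow_left₀ (abs_nonneg _) (Complex.abs_re_le_norm _) 2

theorem moment_nonneg {A P : H →L[ℂ] H} (hA : A.IsPositive) (hP : (A * P).IsPositive)
    (x : H) (j : ℕ) : 0 ≤ (innA A ((P ^ j) x) x).re :=
  (mul_pow_isPositive hA hP j).re_inner_nonneg_left x

omit [CompleteSpace H] in
theorem innA_self_re_eq_one {A : H →L[ℂ] H} {x : H} (hx : vnormA A x = 1) :
    (innA A x x).re = 1 := by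
  simpa [vnormA] using hx

/-- McCarthy's inequality for natural powers of an `A`-positive operator. -/
theorem innA_re_pow_le {A P : H →L[ℂ] H} (hA : A.IsPositive) (hP : (A * P).IsPositive)
    {x : H} (hx : vnormA A x = 1) (n : ℕ) :
    (innA A (P x) x).re ^ n ≤ (innA A ((P ^ n) x) x).re := by
  have hx1 := innA_self_re_eq_one hx
  have h1 : 0 ≤ (innA A (P x) x).re := by simpa using moment_nonneg hA hP x 1
  have step : ∀ j, (innA A ((P ^ j) x) x).re * (innA A (P x) x).re ≤
      (innA A ((P ^ (j + 1)) x) x).re := by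
    intro j
    induction j with
    | zero => simp [hx1]
    | succ j ih =>
      have hsq := moment_sq_le hA hP x j
      have h0 := moment_nonneg hA hP x j
      have h1' := moment_nonneg hA hP x (j + 1)
      have h2 := moment_nonneg hA hP x (j + 2)
      rcases h0.eq_or_lt with hz | hpos
      · rw [← hz, zero_mul] at hsq
        rw [pow_eq_zero_iff two_ne_zero |>.mp (le_antisymm hsq (sq_nonneg _)), zero_mul]
        exact h2
      · refine le_of_mul_le_mul_left ?_ hpos
        nlinarith
  induction n with
  | zero => simp [hx1]
  | succ n ih =>
    rw [pow_succ]
    exact (mul_le_mul_of_nonneg_right ih h1).trans (step n)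

/-- The quadratic form of an `A`-positive operator on `A`-unit vectors is bounded by the operator
norm. -/
theorem innA_re_le_norm {A P : H →L[ℂ] H} (hA : A.IsPositive) (hP : (A * P).IsPositive)
    {x : H} (hx : vnormA A x = 1) : (innA A (P x) x).re ≤ ‖P‖ := by
  by_contra! hlt
  have hm : 0 < (innA A (P x) x).re := (norm_nonneg P).trans_lt hlt
  have hbound : ∀ n, (innA A (P x) x).re ^ n ≤ ‖P‖ ^ n * (‖A‖ * ‖x‖ * ‖x‖) := by
    intro n
    rcases n.eq_zero_or_pos with rfl | hn
    · have : (innA A x x).re ≤ ‖A‖ * ‖x‖ * ‖x‖ :=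
        (Complex.re_le_norm _).trans ((norm_inner_le_norm _ _).trans
          (mul_le_mul_of_nonneg_right (A.le_opNorm x) (norm_nonneg x)))
      simpa [innA_self_re_eq_one hx] using this
    calc (innA A (P x) x).re ^ n ≤ (innA A ((P ^ n) x) x).re := innA_re_pow_le hA hP hx n
      _ ≤ ‖A ((P ^ n) x)‖ * ‖x‖ := (Complex.re_le_norm _).trans (norm_inner_le_norm _ _)
      _ ≤ (‖A‖ * (‖P‖ ^ n * ‖x‖)) * ‖x‖ := by
          gcongr
          refine (A.le_opNorm _).trans ?_
          gcongr
          refine ((P ^ n).le_opNorm x).trans ?_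
          gcongr
          exact norm_pow_le' P hn
      _ = ‖P‖ ^ n * (‖A‖ * ‖x‖ * ‖x‖) := by ring
  have hlim := (tendsto_pow_atTop_nhds_zero_of_lt_one
    (div_nonneg (norm_nonneg P) hm.le) ((div_lt_one hm).mpr hlt)).mul_const (‖A‖ * ‖x‖ * ‖x‖)
  rw [zero_mul] at hlim
  refine absurd (ge_of_tendsto' hlim fun n => ?_) (not_le.mpr one_pos)
  rw [div_pow, div_mul_eq_mul_div, le_div_iff₀ (pow_pos hm n), one_mul]
  exact hbound n

omit [CompleteSpace H] in
theorem norm_innA_add_I_smul {A P Q : H →L[ℂ] H} (hP : (A * P).IsPositive)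
    (hQ : (A * Q).IsPositive) (x : H) :
    ‖innA A ((P + Complex.I • Q) x) x‖ =
      Real.sqrt ((innA A (P x) x).re ^ 2 + (innA A (Q x) x).re ^ 2) := by
  have hp : innA A (P x) x = ((innA A (P x) x).re : ℂ) := hP.inner_eq_re x
  have hq : innA A (Q x) x = ((innA A (Q x) x).re : ℂ) := hQ.inner_eq_re x
  have h : innA A ((P + Complex.I • Q) x) x =
      innA A (P x) x - Complex.I * innA A (Q x) x := by
    simp [innA, sub_eq_add_neg, mul_comm]
  rw [h, hp, hq, Complex.norm_def, Complex.normSq_apply]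
  simp [sq]

theorem norm_innA_add_I_smul_le_wA {A P Q : H →L[ℂ] H} (hA : A.IsPositive)
    (hP : (A * P).IsPositive) (hQ : (A * Q).IsPositive) {x : H} (hx : vnormA A x = 1) :
    ‖innA A ((P + Complex.I • Q) x) x‖ ≤ wA A (P + Complex.I • Q) := by
  refine le_csSup ⟨Real.sqrt (‖P‖ ^ 2 + ‖Q‖ ^ 2), ?_⟩ ⟨x, hx, rfl⟩
  rintro c ⟨y, hy, rfl⟩
  rw [norm_innA_add_I_smul hP hQ]
  have hp0 : 0 ≤ (innA A (P y) y).re := hP.re_inner_nonneg_left y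
  have hq0 : 0 ≤ (innA A (Q y) y).re := hQ.re_inner_nonneg_left y
  gcongr
  · exact innA_re_le_norm hA hP hy
  · exact innA_re_le_norm hA hQ hy

omit [CompleteSpace H] in
theorem wA_nonneg (A T : H →L[ℂ] H) : 0 ≤ wA A T := by
  refine Real.sSup_nonneg ?_
  rintro c ⟨x, -, rfl⟩
  exact norm_nonneg _

theorem mul_eq_adjoint_mul {A T X : H →L[ℂ] H} (hA : A.IsPositive)
    (hX : A * X = adjoint T * A) : A * T = adjoint X * A := by
  have h := congrArg star hX
  rw [star_mul, star_mul, hA.isSelfAdjoint.star_eq] at h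
  exact (h.trans (congrArg (A * ·) (adjoint_adjoint T))).symm

/-- The estimate for a single operator `T` with `A`-adjoint `X` at an `A`-unit vector. -/
theorem norm_innA_pow_le {A T X : H →L[ℂ] H} (hA : A.IsPositive)
    (hX : A * X = adjoint T * A) (n : ℕ) {x : H} (hx : vnormA A x = 1) :
    ‖innA A (T x) x‖ ^ (2 * n) ≤
      wA A ((X * T) ^ n + Complex.I • (T * X) ^ n) / Real.sqrt 2 := by
  have hT := mul_eq_adjoint_mul hA hX
  have eP : A * (X * T) = adjoint T * (A * T) := by rw [← mul_assoc, hX, mul_assoc]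
  have eQ : A * (T * X) = adjoint X * (A * X) := by rw [← mul_assoc, hT, mul_assoc]
  have hP : (A * (X * T)).IsPositive := eP ▸ hA.adjoint_conj T
  have hQ : (A * (T * X)).IsPositive := eQ ▸ hA.adjoint_conj X
  have hx1 : (inner ℂ (A x) x : ℂ).re = 1 := innA_self_re_eq_one hx
  have hp : ‖innA A (T x) x‖ ^ 2 ≤ (innA A ((X * T) x) x).re := by
    have h := hA.norm_inner_sq_le (T x) x
    have e : innA A ((X * T) x) x = inner ℂ (A (T x)) (T x) := by
      change inner ℂ ((A * (X * T)) x) x = _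
      rw [eP]
      exact adjoint_inner_left T x _
    rw [hx1, mul_one] at h
    rwa [e]
  have hq : ‖innA A (T x) x‖ ^ 2 ≤ (innA A ((T * X) x) x).re := by
    have h := hA.norm_inner_sq_le x (X x)
    have e : innA A ((T * X) x) x = inner ℂ (A (X x)) (X x) := by
      change inner ℂ ((A * (T * X)) x) x = _
      rw [eQ]
      exact adjoint_inner_left X x _
    have e' : innA A (T x) x = inner ℂ (A x) (X x) := by
      change inner ℂ ((A * T) x) x = _
      rw [hT]
      exact adjoint_inner_left X x _
    rw [hx1, one_mul] at h
    rwa [e, e']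
  have hpn := (pow_le_pow_left₀ (sq_nonneg _) hp n).trans (innA_re_pow_le hA hP hx n)
  have hqn := (pow_le_pow_left₀ (sq_nonneg _) hq n).trans (innA_re_pow_le hA hQ hx n)
  have hw := norm_innA_add_I_smul_le_wA hA (mul_pow_isPositive hA hP n)
    (mul_pow_isPositive hA hQ n) hx
  rw [norm_innA_add_I_smul (mul_pow_isPositive hA hP n) (mul_pow_isPositive hA hQ n)] at hw
  rw [le_div_iff₀ (by positivity), pow_mul]
  refine le_trans (Real.le_sqrt_of_sq_le ?_) hw
  have h0 : 0 ≤ (‖innA A (T x) x‖ ^ 2) ^ n := by positivity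
  rw [mul_pow, Real.sq_sqrt zero_le_two]
  nlinarith [pow_le_pow_left₀ h0 hpn 2, pow_le_pow_left₀ h0 hqn 2]

theorem stmt15 (A : H →L[ℂ] H) (hA : A.IsPositive) (hA0 : A ≠ 0)
    (k : ℕ) (hk : 1 ≤ k) (n : ℕ) (hn : 1 ≤ n)
    (S Ssharp : Fin k → (H →L[ℂ] H))
    (hS : ∀ i, IsReducedAAdjoint A (S i) (Ssharp i)) :
    wA A (∑ i, S i) ^ (2 * n) ≤
      ((k : ℝ) ^ (2 * n - 1) / Real.sqrt 2) *
        ∑ i, wA A ((Ssharp i * S i) ^ n + Complex.I • (S i * Ssharp i) ^ n) := by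
  have hR : 0 ≤ ((k : ℝ) ^ (2 * n - 1) / Real.sqrt 2) *
      ∑ i, wA A ((Ssharp i * S i) ^ n + Complex.I • (S i * Ssharp i) ^ n) :=
    mul_nonneg (by positivity) (Finset.sum_nonneg fun i _ => wA_nonneg _ _)
  have h2n : 2 * n ≠ 0 := by omega
  have hk0 : (0 : ℝ) < k := by exact_mod_cast hk
  suffices hw : wA A (∑ i, S i) ≤ (((k : ℝ) ^ (2 * n - 1) / Real.sqrt 2) *
      ∑ i, wA A ((Ssharp i * S i) ^ n + Complex.I • (S i * Ssharp i) ^ n)) ^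
        (((2 * n : ℕ) : ℝ)⁻¹) by
    refine (pow_le_pow_left₀ (wA_nonneg _ _) hw _).trans_eq ?_
    exact Real.rpow_inv_natCast_pow hR h2n
  refine Real.sSup_le ?_ (Real.rpow_nonneg hR _)
  rintro c ⟨x, hx, rfl⟩
  refine (pow_le_pow_iff_left₀ (norm_nonneg _) (Real.rpow_nonneg hR _) h2n).mp ?_
  rw [Real.rpow_inv_natCast_pow hR h2n]
  have hsum : ‖innA A ((∑ i, S i) x) x‖ ≤ ∑ i, ‖innA A (S i x) x‖ := by
    have e : innA A ((∑ i, S i) x) x = ∑ i, innA A (S i x) x := by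
      simp [innA]
    rw [e]
    exact norm_sum_le _ _
  have hpow := pow_sum_div_card_le_sum_pow (s := Finset.univ)
    (f := fun i => ‖innA A (S i x) x‖) (fun i _ => norm_nonneg _) (2 * n - 1)
  rw [Nat.sub_add_cancel (by omega), Finset.card_univ, Fintype.card_fin,
    div_le_iff₀' (by positivity)] at hpow
  calc ‖innA A ((∑ i, S i) x) x‖ ^ (2 * n)
      ≤ (∑ i, ‖innA A (S i x) x‖) ^ (2 * n) := pow_le_pow_left₀ (norm_nonneg _) hsum _
    _ ≤ (k : ℝ) ^ (2 * n - 1) * ∑ i, ‖innA A (S i x) x‖ ^ (2 * n) := hpow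
    _ ≤ (k : ℝ) ^ (2 * n - 1) *
        ∑ i, wA A ((Ssharp i * S i) ^ n + Complex.I • (S i * Ssharp i) ^ n) / Real.sqrt 2 := by
        gcongr with i
        exact norm_innA_pow_le hA (hS i).1 n hx
    _ = _ := by rw [← Finset.sum_div, mul_div_assoc', div_mul_eq_mul_div]
end
end
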